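/- arXiv:cs/0410039 — 5 statements merged into one kernel-verified Lean document; each statement's English description precedes it below -/
import Mathlib

section
/- Let G be a finite graph with vertex set V, let P be a hereditary property on G, and let v ∈ V. Then every maximal P-subgraph M of G satisfies: either M is a maximal P-subgraph of G[V∖{v}], or there exists a maximal P-subgraph H of G[V∖{v}] such that M is a maximal P-subgraph of G[H ∪ {v}]. Equivalently, MaxSol_P(G) ⊆ MaxSol_P(G[V∖{v}]) ∪ ⋃_{H ∈ MaxSol_P(G[V∖{v}])} MaxSol_P(G[H ∪ {v}]). -/
/-- `S` is a maximal `P`-subgraph of `G[W]`: `S ⊆ W`, `P S` holds, and no `T`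
with `S ⊊ T ⊆ W` satisfies `P`. -/
def MaximalPIn {V : Type*} (P : Set V → Prop) (W S : Set V) : Prop :=
  S ⊆ W ∧ P S ∧ ∀ T : Set V, S ⊂ T → T ⊆ W → ¬ P T

/-!
By heredity `M ∖ {v}` satisfies `P`, so by finiteness it extends to a maximal `P`-subgraph `H` of
`G[V ∖ {v}]`. Then `M ⊆ H ∪ {v}`, and maximality of `M` passes to every smaller vertex set still
containing `M`. If `v ∉ M`, this argument produces `H = M`, so the second alternative always holds.
-/

section

variable {V : Type*} {P : Set V → Prop} {U W X M S : Set V}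

theorem maximalPIn_iff_maximal :
    MaximalPIn P W S ↔ Maximal (fun T => T ⊆ W ∧ P T) S := by
  rw [maximal_iff_forall_gt, MaximalPIn, and_assoc]
  simp only [not_and]

theorem MaximalPIn.anti (hM : MaximalPIn P W M) (hMU : M ⊆ U) (hUW : U ⊆ W) :
    MaximalPIn P U M :=
  ⟨hMU, hM.2.1, fun T hMT hTU => hM.2.2 T hMT (hTU.trans hUW)⟩

theorem exists_maximalPIn_superset (hW : W.Finite) (hSW : S ⊆ W) (hS : P S) :
    ∃ H, S ⊆ H ∧ MaximalPIn P W H := by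
  have candidates_finite : {T | T ⊆ W ∧ P T}.Finite :=
    hW.finite_subsets.subset fun _ hT => hT.1
  obtain ⟨H, hSH, hH⟩ := candidates_finite.exists_le_maximal ⟨hSW, hS⟩
  exact ⟨H, hSH, maximalPIn_iff_maximal.mpr hH⟩

theorem maxSol_subset_of_deleteVertex_general (hM : MaximalPIn P W M) (hXW : X ⊆ W)
    (hfin : (W \ X).Finite) (hMX : P (M \ X)) :
    ∃ H, MaximalPIn P (W \ X) H ∧ MaximalPIn P (X ∪ H) M := by
  obtain ⟨H, hMH, hH⟩ :=
    exists_maximalPIn_superset hfin (Set.sdiff_subset_sdiff_left hM.1) hMX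
  have hHW : H ⊆ W := hH.1.trans Set.sdiff_subset
  exact ⟨H, hH, hM.anti (Set.sdiff_subset_iff.mp hMH) (Set.union_subset hXW hHW)⟩

end

/-- for a hereditary property `P` on a finite graph `G` and a
vertex `v`, every maximal `P`-subgraph `M` of `G` is either a maximal
`P`-subgraph of `G[V ∖ {v}]`, or a maximal `P`-subgraph of `G[H ∪ {v}]` for
some maximal `P`-subgraph `H` of `G[V ∖ {v}]`. -/
theorem maxSol_subset_of_deleteVertex {V : Type*} [Fintype V] (G : SimpleGraph V)
    (P : Set V → Prop) (hered : ∀ S T : Set V, P S → T ⊆ S → P T) (v : V)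
    (M : Set V) (hM : MaximalPIn P Set.univ M) :
    MaximalPIn P (Set.univ \ {v}) M ∨
      ∃ H : Set V, MaximalPIn P (Set.univ \ {v}) H ∧
        MaximalPIn P (insert v H) M :=
  Or.inr <| maxSol_subset_of_deleteVertex_general hM (Set.subset_univ {v}) (Set.toFinite _)
    (hered M (M \ {v}) hM.2.1 Set.sdiff_subset)
end

section
/- Let G be a finite graph with vertex set V, let P be a connected-hereditary property on G, let W ⊆ V and v_r ∈ W. Let H be a subset of W containing v_r that is maximal among subsets S ⊆ W with P(S) and v_r ∈ S, and let M ⊆ V with P(M), v_r ∈ M and H ⊆ M. Then H equals the vertex set of the connected component of v_r in the induced subgraph G[M ∩ W]. -/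
/-- `G[S]` is connected: `S` is nonempty and any two vertices of `S` are
joined by a path inside the induced subgraph `G[S]`. -/
def ConnOn {V : Type*} (G : SimpleGraph V) (S : Set V) : Prop :=
  S.Nonempty ∧ ∀ u ∈ S, ∀ v ∈ S,
    Relation.ReflTransGen (fun a b => a ∈ S ∧ b ∈ S ∧ G.Adj a b) u v

/-!
The component `C` of `vr` in `G[M ∩ W]` is connected and contained in `M`, so it inherits `P` from
`M`. Since `H` is connected, contains `vr` and lies in `M ∩ W`, it is contained in `C`, and
maximality forces `H = C`.
-/

open Relation

section Component

variable {V : Type*} {G : SimpleGraph V} {S T : Set V} {u v : V}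

/-- Adjacency in the induced subgraph `G[S]`, as a relation on the ambient vertex type: the
relation whose reflexive transitive closure occurs in `ConnOn`. -/
def AdjOn (G : SimpleGraph V) (S : Set V) (a b : V) : Prop :=
  a ∈ S ∧ b ∈ S ∧ G.Adj a b

/-- The vertex set of the connected component of `v` in `G[S]`, as a set of ambient vertices.
It is empty when `v ∉ S`. -/
def componentOn (G : SimpleGraph V) (S : Set V) (v : V) : Set V :=
  {u ∈ S | ReflTransGen (AdjOn G S) v u}

instance AdjOn.stdSymm : Std.Symm (AdjOn G S) where
  symm _ _ := fun ⟨ha, hb, hab⟩ ↦ ⟨hb, ha, hab.symm⟩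

theorem AdjOn.mono (hTS : T ⊆ S) : AdjOn G T ≤ AdjOn G S :=
  fun _ _ ⟨ha, hb, hab⟩ ↦ ⟨hTS ha, hTS hb, hab⟩

theorem componentOn_subset : componentOn G S v ⊆ S :=
  Set.sep_subset _ _

theorem mem_componentOn_self (hv : v ∈ S) : v ∈ componentOn G S v :=
  ⟨hv, .refl⟩

theorem ConnOn.subset_componentOn (hT : ConnOn G T) (hTS : T ⊆ S) (hv : v ∈ T) :
    T ⊆ componentOn G S v :=
  fun u hu ↦ ⟨hTS hu, ReflTransGen.mono (AdjOn.mono hTS) v u (hT.2 v hv u hu)⟩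

theorem reflTransGen_adjOn_componentOn (h : ReflTransGen (AdjOn G S) v u) :
    ReflTransGen (AdjOn G (componentOn G S v)) v u := by
  induction h with
  | refl => exact .refl
  | tail hvb hbc ih =>
    obtain ⟨hb, hc, hadj⟩ := hbc
    exact ih.tail ⟨⟨hb, hvb⟩, ⟨hc, hvb.tail ⟨hb, hc, hadj⟩⟩, hadj⟩

theorem connOn_componentOn (hv : v ∈ S) : ConnOn G (componentOn G S v) := by
  refine ⟨⟨v, mem_componentOn_self hv⟩, fun a ha b hb ↦ ?_⟩
  have hva : ReflTransGen (AdjOn G (componentOn G S v)) v a := reflTransGen_adjOn_componentOn ha.2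
  have hvb : ReflTransGen (AdjOn G (componentOn G S v)) v b := reflTransGen_adjOn_componentOn hb.2
  exact (symm hva).trans hvb

end Component

theorem maximal_with_vertex_eq_component_general {V : Type*} {G : SimpleGraph V}
    {P : Set V → Prop} (hered : ∀ S T : Set V, P S → T ⊆ S → ConnOn G T → P T)
    {W H M : Set V} {vr : V} (hH : Maximal (fun S ↦ S ⊆ W ∧ vr ∈ S ∧ P S) H)
    (hconnH : ConnOn G H) (hPM : P M) (hHM : H ⊆ M) :
    H = componentOn G (M ∩ W) vr := by
  obtain ⟨hHW, hvrH, -⟩ := hH.prop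
  have hHMW : H ⊆ M ∩ W := Set.subset_inter hHM hHW
  have hconn : ConnOn G (componentOn G (M ∩ W) vr) := connOn_componentOn (hHMW hvrH)
  have hP : P (componentOn G (M ∩ W) vr) :=
    hered M _ hPM (componentOn_subset.trans Set.inter_subset_left) hconn
  exact hH.eq_of_subset
    ⟨componentOn_subset.trans Set.inter_subset_right, mem_componentOn_self (hHMW hvrH), hP⟩
    (hconnH.subset_componentOn hHMW hvrH)

/-- for a connected-hereditary property `P` on a finite graph
`G`, `W ⊆ V`, `v_r ∈ W`: if `H` is maximal among the subsets `S ⊆ W` with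
`P S` and `v_r ∈ S`, and `M` satisfies `P M`, `v_r ∈ M`, `H ⊆ M`, then `H` is
the vertex set of the connected component of `v_r` in `G[M ∩ W]`. -/
theorem maximal_with_vertex_eq_component {V : Type*} [Fintype V] (G : SimpleGraph V)
    (P : Set V → Prop)
    (hconn : ∀ S : Set V, P S → ConnOn G S)
    (hered : ∀ S T : Set V, P S → T ⊆ S → ConnOn G T → P T)
    (W : Set V) (vr : V) (hvrW : vr ∈ W)
    (H : Set V) (hHW : H ⊆ W) (hvrH : vr ∈ H) (hPH : P H)
    (hmax : ∀ T : Set V, H ⊂ T → T ⊆ W → vr ∈ T → ¬ P T)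
    (M : Set V) (hPM : P M) (hvrM : vr ∈ M) (hHM : H ⊆ M) :
    H = {u ∈ M ∩ W |
      Relation.ReflTransGen
        (fun a b => a ∈ M ∩ W ∧ b ∈ M ∩ W ∧ G.Adj a b) vr u} :=
  maximal_with_vertex_eq_component_general hered (Set.maximal_iff_forall_ssuperset.2
    ⟨⟨hHW, hvrH, hPH⟩, fun T hHT hT ↦ hmax T hHT hT.1 hT.2.1 hT.2.2⟩) (hconn H hPH) hPM hHM
end

section
/- Let G be a finite graph with vertex set V, let P be a connected-hereditary property on G, let W ⊆ V and v_r ∈ W. Then the number of subsets of W containing v_r that are maximal among subsets S ⊆ W with P(S) and v_r ∈ S is at most the number of subsets of V containing v_r that are maximal among subsets S ⊆ V with P(S) and v_r ∈ S; i.e., |MaxSol_P^{v_r}(G[W])| ≤ |MaxSol_P^{v_r}(G)|. -/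
/-- `S ∈ MaxSol_P^{v}(G[W])`: `S ⊆ W`, `P S`, `v ∈ S`, and `S` is maximal
among such subsets (no `T` with `S ⊊ T ⊆ W`, `v ∈ T` and `P T`). -/
def MaximalPInWith {V : Type*} (P : Set V → Prop) (W : Set V) (v : V) (S : Set V) : Prop :=
  S ⊆ W ∧ P S ∧ v ∈ S ∧ ∀ T : Set V, S ⊂ T → T ⊆ W → v ∈ T → ¬ P T

/-!
Extend each maximal solution in `W` containing the root to a maximal solution in the larger vertex
set, by Zorn's lemma. The extension determines the original: two maximal solutions in `W` inside a
common solution have a connected union, since they share the root, so by heredity their union is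
again a solution in `W`, and maximality makes it equal to both. Hence the extension map is
injective.
-/

theorem ConnOn.union {V : Type*} {G : SimpleGraph V} {S T : Set V}
    (hS : ConnOn G S) (hT : ConnOn G T) (hST : (S ∩ T).Nonempty) : ConnOn G (S ∪ T) := by
  obtain ⟨r, hrS, hrT⟩ := hST
  have path_mono {A B : Set V} (hAB : A ⊆ B) :
      Relation.ReflTransGen (fun a b => a ∈ A ∧ b ∈ A ∧ G.Adj a b) ≤
        Relation.ReflTransGen (fun a b => a ∈ B ∧ b ∈ B ∧ G.Adj a b) :=
    Relation.ReflTransGen.mono fun _ _ h => ⟨hAB h.1, hAB h.2.1, h.2.2⟩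
  have inl := path_mono (Set.subset_union_left (s := S) (t := T))
  have inr := path_mono (Set.subset_union_right (s := S) (t := T))
  refine ⟨⟨r, .inl hrS⟩, fun u hu v hv => .trans (b := r) ?_ ?_⟩
  · exact hu.elim (fun hu => inl _ _ (hS.2 u hu r hrS)) fun hu => inr _ _ (hT.2 u hu r hrT)
  · exact hv.elim (fun hv => inl _ _ (hS.2 r hrS v hv)) fun hv => inr _ _ (hT.2 r hrT v hv)

theorem sUnion_mem_of_isChain_of_finite {V : Type*} [Finite V] {c : Set (Set V)}
    (hc : IsChain (· ⊆ ·) c) (hne : c.Nonempty) : ⋃₀ c ∈ c := by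
  obtain ⟨M, hM, hcM⟩ := hc.directedOn.exists_mem_subset_of_finite_of_subset_sUnion hne
    (Set.toFinite (⋃₀ c)) Set.Subset.rfl
  rwa [hcM.antisymm (Set.subset_sUnion_of_mem hM)]

theorem maximalPInWith_iff_maximal {V : Type*} {P : Set V → Prop} {W S : Set V} {v : V} :
    MaximalPInWith P W v S ↔ Maximal (fun T => T ⊆ W ∧ P T ∧ v ∈ T) S := by
  grind [MaximalPInWith, Set.maximal_iff_forall_ssuperset]

namespace MaximalPInWith

variable {V : Type*} {P : Set V → Prop} {W S : Set V} {v : V}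

theorem exists_superset
    (hchain : ∀ c ⊆ {S : Set V | P S}, IsChain (· ⊆ ·) c → c.Nonempty → P (⋃₀ c))
    (hSW : S ⊆ W) (hS : P S) (hv : v ∈ S) : ∃ M, S ⊆ M ∧ MaximalPInWith P W v M := by
  simp only [maximalPInWith_iff_maximal]
  refine zorn_subset_nonempty {T | T ⊆ W ∧ P T ∧ v ∈ T} (fun c hc hcc hne => ?_) S ⟨hSW, hS, hv⟩
  obtain ⟨T, hT⟩ := hne
  exact ⟨⋃₀ c, ⟨Set.sUnion_subset fun A hA => (hc hA).1,
    hchain c (fun A hA => (hc hA).2.1) hcc ⟨T, hT⟩, T, hT, (hc hT).2.2⟩,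
    fun _ => Set.subset_sUnion_of_mem⟩

theorem eq_of_subset_of_subset {G : SimpleGraph V} {T M : Set V}
    (hconn : ∀ S : Set V, P S → ConnOn G S)
    (hered : ∀ S T : Set V, P S → T ⊆ S → ConnOn G T → P T)
    (hS : MaximalPInWith P W v S) (hT : MaximalPInWith P W v T)
    (hM : P M) (hSM : S ⊆ M) (hTM : T ⊆ M) : S = T := by
  rw [maximalPInWith_iff_maximal] at hS hT
  obtain ⟨hSW, hPS, hvS⟩ := hS.prop
  obtain ⟨hTW, hPT, hvT⟩ := hT.prop
  have union_conn : ConnOn G (S ∪ T) := (hconn S hPS).union (hconn T hPT) ⟨v, hvS, hvT⟩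
  have union_sol : S ∪ T ⊆ W ∧ P (S ∪ T) ∧ v ∈ S ∪ T :=
    ⟨Set.union_subset hSW hTW, hered M _ hM (Set.union_subset hSM hTM) union_conn, .inl hvS⟩
  calc S = S ∪ T := hS.eq_of_subset union_sol Set.subset_union_left
    _ = T := (hT.eq_of_subset union_sol Set.subset_union_right).symm

end MaximalPInWith

theorem card_maxSolWith_restriction_le_general {V : Type*} (G : SimpleGraph V)
    (P : Set V → Prop)
    (hconn : ∀ S : Set V, P S → ConnOn G S)
    (hered : ∀ S T : Set V, P S → T ⊆ S → ConnOn G T → P T)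
    (hchain : ∀ c ⊆ {S : Set V | P S}, IsChain (· ⊆ ·) c → c.Nonempty → P (⋃₀ c))
    {W U : Set V} (hWU : W ⊆ U) (vr : V) :
    Cardinal.mk {S : Set V | MaximalPInWith P W vr S} ≤
      Cardinal.mk {S : Set V | MaximalPInWith P U vr S} := by
  have extension (S : {S : Set V | MaximalPInWith P W vr S}) :
      ∃ M : {M : Set V | MaximalPInWith P U vr M}, S.1 ⊆ M.1 := by
    obtain ⟨S, hSW, hPS, hvS, -⟩ := S
    obtain ⟨M, hSM, hM⟩ := MaximalPInWith.exists_superset hchain (hSW.trans hWU) hPS hvS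
    exact ⟨⟨M, hM⟩, hSM⟩
  choose extend subset_extend using extension
  have extend_injective : Function.Injective extend := by
    intro S T hST
    obtain ⟨-, hP, -⟩ := (extend S).2
    have hTM : T.1 ⊆ (extend S).1 := hST ▸ subset_extend T
    exact Subtype.ext <|
      S.2.eq_of_subset_of_subset hconn hered T.2 hP (subset_extend S) hTM
  exact Cardinal.mk_le_of_injective extend_injective

/-- for a connected-hereditary property `P` on a finite graph
`G`, `W ⊆ V` and `v_r ∈ W`, we have `|MaxSol_P^{v_r}(G[W])| ≤ |MaxSol_P^{v_r}(G)|`. -/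
theorem card_maxSolWith_restriction_le {V : Type*} [Fintype V] (G : SimpleGraph V)
    (P : Set V → Prop)
    (hconn : ∀ S : Set V, P S → ConnOn G S)
    (hered : ∀ S T : Set V, P S → T ⊆ S → ConnOn G T → P T)
    (W : Set V) (vr : V) (hvrW : vr ∈ W) :
    {S : Set V | MaximalPInWith P W vr S}.ncard ≤
      {S : Set V | MaximalPInWith P Set.univ vr S}.ncard := by
  exact Cardinal.toNat_le_toNat
    (card_maxSolWith_restriction_le_general G P hconn hered
      (fun _ hc hchain hne => hc (sUnion_mem_of_isChain_of_finite hchain hne))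
      W.subset_univ vr)
    (Set.toFinite _).lt_aleph0
end

section
/- Let G be a finite directed graph with vertex set V and distinguished vertex r, let P be a rooted-hereditary property on G, let W ⊆ V with r ∈ W. Let H be a maximal P-subgraph of G[W], and let M ⊆ V with P(M) and H ⊆ M. Then H equals the set of vertices of M ∩ W that are reachable from r by a directed path inside the induced subgraph G[M ∩ W]. -/
/-- `G[S]` is rooted at `r`: `r ∈ S` and every vertex of `S` is reachable from
`r` by a directed path inside the induced subgraph `G[S]`. -/
def RootedOn {V : Type*} (E : V → V → Prop) (r : V) (S : Set V) : Prop :=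
  r ∈ S ∧ ∀ v ∈ S,
    Relation.ReflTransGen (fun a b => a ∈ S ∧ b ∈ S ∧ E a b) r v

/-!
The vertices reachable from `r` inside `G[S]` form the largest rooted subset of `S`. For
`S = M ∩ W` this set therefore contains `H`, and, being a rooted subset of `M`, it inherits `P`
from `M`. Since it lies in `W`, maximality of `H` forces equality.
-/

section ReachablePart

variable {V : Type*} {E : V → V → Prop} {r : V} {S T : Set V}

/-- The set of vertices of `G[S]` reachable from `r` by a directed path inside `G[S]`. If `r ∈ S`,
it is the largest rooted subset of `S`; otherwise it is empty. -/
def reachablePart (E : V → V → Prop) (r : V) (S : Set V) : Set V :=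
  {v ∈ S | Relation.ReflTransGen (fun a b => a ∈ S ∧ b ∈ S ∧ E a b) r v}

theorem reachablePart_subset : reachablePart E r S ⊆ S :=
  Set.sep_subset S _

theorem RootedOn.subset_reachablePart (hS : RootedOn E r S) (hST : S ⊆ T) :
    S ⊆ reachablePart E r T := by
  intro v hv
  refine ⟨hST hv, Relation.ReflTransGen.mono ?_ r v (hS.2 v hv)⟩
  exact fun _ _ ⟨ha, hb, hab⟩ => ⟨hST ha, hST hb, hab⟩

theorem rootedOn_reachablePart (hr : r ∈ S) : RootedOn E r (reachablePart E r S) := by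
  refine ⟨⟨hr, .refl⟩, fun v hv => ?_⟩
  obtain ⟨-, hrv⟩ := hv
  induction hrv with
  | refl => exact .refl
  | tail hra hab ih =>
    -- Every prefix of a path from `r` inside `S` ends at a vertex of the reachable part.
    exact ih.tail ⟨⟨hab.1, hra⟩, ⟨hab.2.1, hra.tail hab⟩, hab.2.2⟩

end ReachablePart

section Maximal

variable {V : Type*} {P : Set V → Prop} {W H : Set V}

theorem MaximalPIn.eq_of_subset {T : Set V} (hH : MaximalPIn P W H) (hPT : P T)
    (hHT : H ⊆ T) (hTW : T ⊆ W) : H = T := by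
  by_contra hne
  exact hH.2.2 T (hHT.ssubset_of_ne hne) hTW hPT

theorem maximal_rooted_eq_reachable_part_general {E : V → V → Prop} {r : V} {M : Set V}
    (hereditary : ∀ S T : Set V, P S → T ⊆ S → RootedOn E r T → P T)
    (hH : MaximalPIn P W H) (hrooted : RootedOn E r H) (hPM : P M) (hHM : H ⊆ M) :
    H = reachablePart E r (M ∩ W) := by
  have hHMW : H ⊆ M ∩ W := Set.subset_inter hHM hH.1
  have hPreach : P (reachablePart E r (M ∩ W)) :=
    hereditary M _ hPM (reachablePart_subset.trans Set.inter_subset_left)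
      (rootedOn_reachablePart (hHMW hrooted.1))
  exact hH.eq_of_subset hPreach (hrooted.subset_reachablePart hHMW)
    (reachablePart_subset.trans Set.inter_subset_right)

end Maximal

/-- for a rooted-hereditary property `P` on a finite directed
graph `G = (V, E, r)` and `W ⊆ V` with `r ∈ W`: if `H` is a maximal
`P`-subgraph of `G[W]` and `M ⊆ V` satisfies `P M` and `H ⊆ M`, then `H` is
the set of vertices of `M ∩ W` reachable from `r` by a directed path inside
`G[M ∩ W]`. -/
theorem maximal_rooted_eq_reachable_part {V : Type*} [Fintype V]
    (E : V → V → Prop) (r : V) (P : Set V → Prop)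
    (hrooted₁ : ∀ S : Set V, P S → RootedOn E r S)
    (hrooted₂ : ∀ S T : Set V, P S → T ⊆ S → RootedOn E r T → P T)
    (W : Set V) (hrW : r ∈ W)
    (H : Set V) (hH : MaximalPIn P W H)
    (M : Set V) (hPM : P M) (hHM : H ⊆ M) :
    H = {u ∈ M ∩ W |
      Relation.ReflTransGen
        (fun a b => a ∈ M ∩ W ∧ b ∈ M ∩ W ∧ E a b) r u} := by
  exact maximal_rooted_eq_reachable_part_general hrooted₂ hH (hrooted₁ H hH.2.1) hPM hHM
end

section
/- Let n ≥ 1 and let G_n be the finite simple graph with vertex set V = {w} ∪ {v_1, …, v_n} ∪ {u_1, …, u_n} (2n+1 distinct vertices) whose edges are exactly: w–v_i, w–u_i and v_i–u_i for each 1 ≤ i ≤ n. Then a subset S ⊆ V is a maximal bipartite induced subgraph of G_n (i.e., G_n[S] is 2-colorable and no proper superset T ⊋ S has G_n[T] 2-colorable) if and only if either S = V ∖ {w}, or S = {w} ∪ {x_1, …, x_n} where x_i ∈ {v_i, u_i} for each i. Consequently, G_n has exactly 2^n + 1 maximal bipartite induced subgraphs, while G_n ∖ w is itself bipartite. -/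
/-- The graph `G_n` on the `2n + 1` vertices `w = none`,
`v_i = some (i, false)` and `u_i = some (i, true)` (for `i : Fin n`), whose
edges are exactly `w–v_i`, `w–u_i` and `v_i–u_i` for each `i`. -/
def Gn (n : ℕ) : SimpleGraph (Option (Fin n × Bool)) :=
  SimpleGraph.fromRel (fun x y =>
    x = none ∨ ∃ i : Fin n, x = some (i, false) ∧ y = some (i, true))

/-- The induced subgraph `G[S]` is bipartite, i.e. `2`-colorable. -/
def BipOn {V : Type*} (G : SimpleGraph V) (S : Set V) : Prop :=
  ∃ c : V → Bool, ∀ u ∈ S, ∀ v ∈ S, G.Adj u v → c u ≠ c v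

/-- `S` is a maximal bipartite induced subgraph of `G`. -/
def MaxBipOn {V : Type*} (G : SimpleGraph V) (S : Set V) : Prop :=
  BipOn G S ∧ ∀ T : Set V, S ⊂ T → ¬ BipOn G T

/-! If `w` is adjacent to every other vertex, then deleting `w` from a bipartite set that contains
it leaves an independent set: all of its vertices carry the color that `w` does not have.
Conversely `w` can be added to any independent set. Hence the maximal bipartite sets through `w`
are the `insert w I` with `I` maximal among the independent sets avoiding `w`, and when `G ∖ w` is
bipartite but not edgeless, `V ∖ {w}` is the only other one. In `G_n` the graph `G_n ∖ w` is a
perfect matching, whose maximal independent sets choose one endpoint of each edge. -/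

open scoped Cardinal

section UniversalVertex

variable {V : Type*} {G : SimpleGraph V} {S I : Set V} {w : V}

theorem maxBipOn_iff_maximal : MaxBipOn G S ↔ Maximal (BipOn G) S :=
  Set.maximal_iff_forall_ssuperset.symm

theorem bipOn_insert_of_isIndepSet (hI : G.IsIndepSet I) (w : V) : BipOn G (insert w I) := by
  classical
  refine ⟨fun x => decide (x = w), fun x hx y hy hxy hc => ?_⟩
  have hiff : x = w ↔ y = w := by simpa only [decide_eq_decide] using hc
  by_cases hxw : x = w
  · exact hxy.ne (hxw.trans (hiff.1 hxw).symm)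
  · have hyw : y ≠ w := fun h => hxw (hiff.2 h)
    exact hI (hx.resolve_left hxw) (hy.resolve_left hyw) hxy.ne hxy

theorem BipOn.isIndepSet_inter_neighborSet (hS : BipOn G S) (hw : w ∈ S) :
    G.IsIndepSet (S ∩ G.neighborSet w) := by
  obtain ⟨c, hc⟩ := hS
  have color_eq : ∀ x ∈ S ∩ G.neighborSet w, c x = !c w := fun x hx =>
    Bool.eq_not_of_ne (hc w hw x hx.1 hx.2).symm
  exact fun x hx y hy _ hxy => hc x hx.1 y hy.1 hxy ((color_eq x hx).trans (color_eq y hy).symm)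

theorem BipOn.isIndepSet_sdiff_singleton (hG : G.IsUniversal w) (hS : BipOn G S) (hw : w ∈ S) :
    G.IsIndepSet (S \ {w}) := by
  simpa only [hG.neighborSet_eq, Set.sdiff_eq] using hS.isIndepSet_inter_neighborSet hw

theorem maxBipOn_insert_iff (hG : G.IsUniversal w) (hw : w ∉ I) :
    MaxBipOn G (insert w I) ↔ Maximal (fun J => w ∉ J ∧ G.IsIndepSet J) I := by
  rw [maxBipOn_iff_maximal]
  constructor
  · refine fun h => ⟨⟨hw, ?_⟩, fun J hJ hIJ => ?_⟩
    · simpa only [Set.insert_sdiff_self_of_notMem hw] using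
        h.prop.isIndepSet_sdiff_singleton hG (Set.mem_insert w I)
    · exact (Set.insert_subset_insert_iff hJ.1).1 <|
        h.le_of_ge (bipOn_insert_of_isIndepSet hJ.2 w) (Set.insert_subset_insert hIJ)
  · refine fun h => ⟨bipOn_insert_of_isIndepSet h.prop.2 w, fun T hT hIT => ?_⟩
    have hTw : G.IsIndepSet (T \ {w}) := hT.isIndepSet_sdiff_singleton hG (hIT (Set.mem_insert w I))
    have hIT' : I ⊆ T \ {w} := Set.subset_sdiff_singleton ((Set.subset_insert w I).trans hIT) hw
    have hTI : T \ {w} ⊆ I := h.le_of_ge ⟨Set.notMem_sdiff_of_mem rfl, hTw⟩ hIT'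
    exact Set.sdiff_singleton_subset_iff.1 hTI

theorem maxBipOn_compl_singleton (hG : G.IsUniversal w) (hbip : BipOn G {w}ᶜ)
    (hedge : ¬ G.IsIndepSet {w}ᶜ) : MaxBipOn G {w}ᶜ := by
  refine maxBipOn_iff_maximal.2 ⟨hbip, fun T hT hwT => ?_⟩
  refine Set.subset_compl_singleton_iff.2 fun hw => ?_
  exact hedge <|
    (hT.isIndepSet_sdiff_singleton hG hw).mono (Set.subset_sdiff_singleton hwT (by simp))

theorem maxBipOn_iff_of_isUniversal (hG : G.IsUniversal w) (hbip : BipOn G {w}ᶜ)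
    (hedge : ¬ G.IsIndepSet {w}ᶜ) :
    MaxBipOn G S ↔
      S = {w}ᶜ ∨ ∃ I, Maximal (fun J => w ∉ J ∧ G.IsIndepSet J) I ∧ S = insert w I := by
  constructor
  · intro hS
    by_cases hw : w ∈ S
    · have hinsert : insert w (S \ {w}) = S := Set.insert_sdiff_self_of_mem hw
      exact .inr ⟨S \ {w}, (maxBipOn_insert_iff hG (by simp)).1 (hinsert.symm ▸ hS), hinsert.symm⟩
    · exact .inl <| (maxBipOn_iff_maximal.1 hS).eq_of_subset hbip <|
        Set.subset_compl_singleton_iff.2 hw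
  · rintro (rfl | ⟨I, hI, rfl⟩)
    · exact maxBipOn_compl_singleton hG hbip hedge
    · exact (maxBipOn_insert_iff hG hI.prop.1).2 hI

end UniversalVertex

section FriendshipGraph

universe u

variable {ι : Type u}

/-- The friendship (windmill) graph over an arbitrary index type: triangles
`none, some (i, false), some (i, true)`, one for each `i : ι`, glued at the vertex `none`. The
relation is the one in `Gn`, so that `Gn n` is `friendshipGraph (Fin n)` by definition. -/
def friendshipGraph (ι : Type u) : SimpleGraph (Option (ι × Bool)) :=
  SimpleGraph.fromRel (fun x y =>
    x = none ∨ ∃ i : ι, x = some (i, false) ∧ y = some (i, true))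

/-- The vertices `x_i` picked by a choice `f` of one endpoint of each edge `v_i–u_i`. -/
def transversal (f : ι → Bool) : Set (Option (ι × Bool)) :=
  Set.range fun i => some (i, f i)

theorem none_notMem_transversal (f : ι → Bool) : none ∉ transversal f := by
  simp [transversal]

theorem some_mem_transversal {f : ι → Bool} {i : ι} {b : Bool} :
    some (i, b) ∈ transversal f ↔ f i = b := by
  simp [transversal]

theorem transversal_subset_transversal {f g : ι → Bool} :
    transversal f ⊆ transversal g ↔ f = g := by
  refine ⟨fun h => funext fun i => ?_, fun h => h ▸ subset_rfl⟩
  exact (some_mem_transversal.1 (h (some_mem_transversal.2 rfl))).symm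

theorem insert_none_transversal_injective :
    Function.Injective fun f : ι → Bool => insert none (transversal f) := fun f _ h =>
  transversal_subset_transversal.1 <|
    (Set.insert_subset_insert_iff (none_notMem_transversal f)).1 h.subset

theorem isUniversal_none_friendshipGraph : (friendshipGraph ι).IsUniversal none :=
  fun _ h => ⟨h, .inl (.inl rfl)⟩

theorem friendshipGraph_adj_some_some {i j : ι} {a b : Bool} :
    (friendshipGraph ι).Adj (some (i, a)) (some (j, b)) ↔ i = j ∧ a ≠ b := by
  cases a <;> cases b <;> simp [friendshipGraph, eq_comm]

theorem friendshipGraph_adj_false_true (i : ι) :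
    (friendshipGraph ι).Adj (some (i, false)) (some (i, true)) :=
  friendshipGraph_adj_some_some.2 ⟨rfl, Bool.false_ne_true⟩

theorem bipOn_friendshipGraph_compl_none : BipOn (friendshipGraph ι) {none}ᶜ := by
  refine ⟨fun x => x.elim false Prod.snd, ?_⟩
  rintro (_ | ⟨i, a⟩) hx (_ | ⟨j, b⟩) hy hxy
  · exact absurd rfl hx
  · exact absurd rfl hx
  · exact absurd rfl hy
  · exact (friendshipGraph_adj_some_some.1 hxy).2

theorem not_isIndepSet_friendshipGraph_compl_none [Nonempty ι] :
    ¬ (friendshipGraph ι).IsIndepSet {none}ᶜ := by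
  obtain ⟨i⟩ := ‹Nonempty ι›
  have hadj := friendshipGraph_adj_false_true i
  exact fun h => h (Option.some_ne_none _) (Option.some_ne_none _) hadj.ne hadj

theorem isIndepSet_transversal (f : ι → Bool) :
    (friendshipGraph ι).IsIndepSet (transversal f) := by
  rintro _ ⟨i, rfl⟩ _ ⟨j, rfl⟩ _ hij
  obtain ⟨rfl, hne⟩ := friendshipGraph_adj_some_some.1 hij
  exact hne rfl

theorem exists_subset_transversal {I : Set (Option (ι × Bool))} (hnone : none ∉ I)
    (hI : (friendshipGraph ι).IsIndepSet I) : ∃ f, I ⊆ transversal f := by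
  classical
  refine ⟨fun i => decide (some (i, true) ∈ I), ?_⟩
  rintro (_ | ⟨i, b⟩) hx
  · exact absurd hx hnone
  rw [some_mem_transversal]
  cases b with
  | true => exact decide_eq_true hx
  | false =>
    refine decide_eq_false fun hy => ?_
    have hadj := friendshipGraph_adj_false_true i
    exact hI hx hy hadj.ne hadj

theorem maximal_isIndepSet_friendshipGraph_iff {I : Set (Option (ι × Bool))} :
    Maximal (fun J => none ∉ J ∧ (friendshipGraph ι).IsIndepSet J) I ↔ ∃ f, I = transversal f := by
  constructor
  · intro hI
    obtain ⟨f, hf⟩ := exists_subset_transversal hI.prop.1 hI.prop.2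
    exact ⟨f, hI.eq_of_subset ⟨none_notMem_transversal f, isIndepSet_transversal f⟩ hf⟩
  · rintro ⟨f, rfl⟩
    refine ⟨⟨none_notMem_transversal f, isIndepSet_transversal f⟩, fun J hJ hfJ => ?_⟩
    obtain ⟨g, hg⟩ := exists_subset_transversal hJ.1 hJ.2
    obtain rfl := transversal_subset_transversal.1 (hfJ.trans hg)
    exact hg

theorem maxBipOn_friendshipGraph_iff [Nonempty ι] {S : Set (Option (ι × Bool))} :
    MaxBipOn (friendshipGraph ι) S ↔ S = {none}ᶜ ∨ ∃ f, S = insert none (transversal f) := by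
  rw [maxBipOn_iff_of_isUniversal isUniversal_none_friendshipGraph
    bipOn_friendshipGraph_compl_none not_isIndepSet_friendshipGraph_compl_none]
  simp only [maximal_isIndepSet_friendshipGraph_iff, ↓existsAndEq, true_and]

theorem mk_setOf_maxBipOn_friendshipGraph [Nonempty ι] :
    #{S | MaxBipOn (friendshipGraph ι) S} = 2 ^ #ι + 1 := by
  have hset : {S | MaxBipOn (friendshipGraph ι) S} =
      insert {none}ᶜ (Set.range fun f : ι → Bool => insert none (transversal f)) := by
    ext S
    simp only [Set.mem_ofPred_eq, maxBipOn_friendshipGraph_iff, Set.mem_insert_iff, Set.mem_range,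
      eq_comm]
  have hnotMem : {none}ᶜ ∉ Set.range fun f : ι → Bool => insert none (transversal f) := by
    rintro ⟨f, hf⟩
    exact hf.subset (Set.mem_insert none _) rfl
  rw [hset, Cardinal.mk_insert hnotMem, Cardinal.mk_range_eq _ insert_none_transversal_injective]
  simp

end FriendshipGraph

theorem maximal_bipartite_subgraphs_of_Gn_general (ι : Type*) [Nonempty ι] :
    (∀ S : Set (Option (ι × Bool)),
      MaxBipOn (friendshipGraph ι) S ↔
        S = {x | x ≠ none} ∨
          ∃ f : ι → Bool,
            S = insert none (Set.range fun i : ι => some (i, f i))) ∧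
      #{S : Set (Option (ι × Bool)) | MaxBipOn (friendshipGraph ι) S} = 2 ^ #ι + 1 ∧
      BipOn (friendshipGraph ι) {x | x ≠ none} :=
  ⟨fun _ => maxBipOn_friendshipGraph_iff, mk_setOf_maxBipOn_friendshipGraph,
    bipOn_friendshipGraph_compl_none⟩

/-- for `n ≥ 1`, a subset `S` of the vertices of `G_n` is a
maximal bipartite induced subgraph iff `S = V ∖ {w}` or
`S = {w} ∪ {x_1, …, x_n}` with `x_i ∈ {v_i, u_i}` for each `i`; consequently
`G_n` has exactly `2 ^ n + 1` maximal bipartite induced subgraphs, while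
`G_n ∖ w` is itself bipartite. -/
theorem maximal_bipartite_subgraphs_of_Gn (n : ℕ) (hn : 1 ≤ n) :
    (∀ S : Set (Option (Fin n × Bool)),
      MaxBipOn (Gn n) S ↔
        S = {x | x ≠ none} ∨
          ∃ f : Fin n → Bool,
            S = insert none (Set.range fun i : Fin n => some (i, f i))) ∧
      {S : Set (Option (Fin n × Bool)) | MaxBipOn (Gn n) S}.ncard = 2 ^ n + 1 ∧
      BipOn (Gn n) {x | x ≠ none} := by
  have : Nonempty (Fin n) := Fin.pos_iff_nonempty.1 hn
  obtain ⟨hmax, hcard, hbip⟩ := maximal_bipartite_subgraphs_of_Gn_general (Fin n)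
  refine ⟨hmax, (congrArg Cardinal.toNat hcard).trans ?_, hbip⟩
  rw [Cardinal.mk_fin]
  norm_cast
end
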